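/- For integers r ≥ 1 and k ≥ 2 with rk ≥ 3, the error term E_k^r(x) = V_k^r(x) − (2x)^k/ζ(rk) satisfies E_k^r(x) = Ω(x^{k−1}), i.e. limsup_{x→∞} |E_k^r(x)|/x^{k−1} > 0. -/

import Mathlib

open Filter

/-- `V_k^r(x)`: the number of `k`-tuples of nonzero integers with `|x_i| ≤ x`
that are relatively `r`-prime (no prime `p` with `p^r` dividing every `x_i`). -/
noncomputable def V (r k : ℕ) (x : ℝ) : ℕ :=
  Nat.card {t : Fin k → ℤ // (∀ i, t i ≠ 0 ∧ |(t i : ℝ)| ≤ x) ∧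
    ¬ ∃ p : ℕ, p.Prime ∧ ∀ i, (p : ℤ) ^ r ∣ t i}

/-- The Riemann zeta function on real arguments `s > 1`, as a series. -/
noncomputable def zetaR (s : ℝ) : ℝ := ∑' n : ℕ, 1 / ((n : ℝ) + 1) ^ s

open ArithmeticFunction in
open scoped Classical in
lemma mob_sum (r k N : ℕ) (t : Fin k → ℤ)
    (hle : ∀ d : ℕ, (∀ i, (d : ℤ) ^ r ∣ t i) → 1 ≤ d ∧ d ≤ N) :
    ∑ d ∈ (Finset.Icc 1 N).filter (fun d : ℕ => ∀ i, (d : ℤ) ^ r ∣ t i), moebius d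
      = if (∃ p : ℕ, p.Prime ∧ ∀ i, (p : ℤ) ^ r ∣ t i) then 0 else 1 := by
  set P := (Finset.Icc 1 N).filter (fun d : ℕ => ∀ i, (d : ℤ) ^ r ∣ t i) with hP
  have hmem : ∀ d : ℕ, d ∈ P ↔ ∀ i, (d : ℤ) ^ r ∣ t i := by
    intro d
    rw [hP, Finset.mem_filter, Finset.mem_Icc]
    exact ⟨fun h => h.2, fun h => ⟨hle d h, h⟩⟩
  have hD : ∀ i, ((P.lcm id : ℕ) : ℤ) ^ r ∣ t i := by
    have : ∀ S : Finset ℕ, S ⊆ P → ∀ i, ((S.lcm id : ℕ) : ℤ) ^ r ∣ t i := by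
      intro S
      induction S using Finset.induction_on with
      | empty => intro _ i; simp
      | insert a s ha ih =>
        intro hS i
        have h1 := ih (fun x hx => hS (Finset.mem_insert_of_mem hx)) i
        have h2 := (hmem a).1 (hS (Finset.mem_insert_self a s)) i
        rw [Finset.lcm_insert]
        have e : (lcm (id a) (s.lcm id) : ℕ) = Nat.lcm a (s.lcm id) := rfl
        rw [e]
        rw [← Nat.cast_pow, Int.natCast_dvd] at h1 h2 ⊢
        rw [← Nat.pow_lcm_pow]
        exact Nat.lcm_dvd h2 h1
    exact this P (Finset.Subset.refl _)
  set D := P.lcm id with hDdef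
  have hD0 : D ≠ 0 := by have := (hle D hD).1; omega
  have hPD : P = D.divisors := by
    ext d
    rw [Nat.mem_divisors]
    constructor
    · intro h; exact ⟨Finset.dvd_lcm (f := id) h, hD0⟩
    · rintro ⟨h, -⟩
      rw [hmem]
      intro i
      exact (pow_dvd_pow_of_dvd (Int.natCast_dvd_natCast.2 h) r).trans (hD i)
  rw [hPD, ← coe_mul_zeta_apply, moebius_mul_coe_zeta, one_apply]
  have : D = 1 ↔ ¬ ∃ p : ℕ, p.Prime ∧ ∀ i, (p : ℤ) ^ r ∣ t i := by
    rw [Nat.eq_one_iff_not_exists_prime_dvd]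
    push Not
    refine forall_congr' fun p => forall_congr' fun hp => ?_
    have h1 := hmem p
    rw [hPD, Nat.mem_divisors] at h1
    have h2 : p ∣ D ↔ ∀ i, (p : ℤ) ^ r ∣ t i := by rw [← h1]; simp [hD0]
    rw [h2]; push Not; rfl
  by_cases h : D = 1
  · rw [if_pos h, if_neg (this.1 h)]
  · rw [if_neg h, if_pos]
    by_contra h'
    exact h (this.2 h')

/-- nonzero integers in the interval from -N to N -/
noncomputable def TT (N : ℕ) : Finset ℤ := (Finset.Icc (-(N : ℤ)) N).erase 0

lemma card_TT (N : ℕ) : (TT N).card = 2 * N := by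
  rw [TT, Finset.card_erase_of_mem (by simp), Int.card_Icc]
  omega

lemma card_TT_dvd (N m : ℕ) (hm : 1 ≤ m) :
    ((TT N).filter (fun z => (m : ℤ) ∣ z)).card = 2 * (N / m) := by
  rw [← card_TT, ← Finset.card_image_of_injective (TT (N / m))
    (f := fun z : ℤ => (m : ℤ) * z) (fun a b h => by
      have : (m : ℤ) ≠ 0 := by omega
      exact mul_left_cancel₀ this h)]
  congr 1
  ext z
  simp only [TT, Finset.mem_filter, Finset.mem_erase, Finset.mem_Icc, Finset.mem_image]
  have hm' : (0 : ℤ) < m := by omega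
  have key : ∀ w : ℤ, w ≤ ((N / m : ℕ) : ℤ) ↔ (m : ℤ) * w ≤ N := by
    intro w
    rw [Int.natCast_div, Int.le_ediv_iff_mul_le hm', mul_comm]
  constructor
  · rintro ⟨⟨h0, h1, h2⟩, w, rfl⟩
    refine ⟨w, ⟨by rintro rfl; simp at h0, ?_, (key w).2 h2⟩, rfl⟩
    have := (key (-w)).2 (by rw [mul_neg]; omega)
    omega
  · rintro ⟨w, ⟨h0, h1, h2⟩, rfl⟩
    refine ⟨⟨mul_ne_zero hm'.ne' h0, ?_, (key w).1 h2⟩, dvd_mul_right _ _⟩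
    have := (key (-w)).1 (by omega)
    rw [mul_neg] at this
    omega

lemma mem_TT (x : ℝ) (hx : 0 ≤ x) (z : ℤ) : z ∈ TT ⌊x⌋₊ ↔ z ≠ 0 ∧ |(z : ℝ)| ≤ x := by
  rw [TT, Finset.mem_erase, Finset.mem_Icc, ← abs_le, Int.abs_eq_natAbs, ← Int.cast_abs,
    Int.abs_eq_natAbs, Int.cast_natCast, ← Nat.le_floor_iff hx, Nat.cast_le]

open scoped Classical in
lemma V_eq_card (r k : ℕ) (x : ℝ) (hx : 0 ≤ x) :
    V r k x = ((Fintype.piFinset (fun _ : Fin k => TT ⌊x⌋₊)).filter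
      (fun t => ¬ ∃ p : ℕ, p.Prime ∧ ∀ i, (p : ℤ) ^ r ∣ t i)).card := by
  rw [V]
  apply Nat.subtype_card
  intro t
  rw [Finset.mem_filter, Fintype.mem_piFinset]
  simp only [mem_TT x hx]

open ArithmeticFunction in
open scoped Classical in
lemma V_formula (r k : ℕ) (hr : 1 ≤ r) (hk : 2 ≤ k) (x : ℝ) (hx : 0 ≤ x) :
    (V r k x : ℤ) = ∑ d ∈ Finset.Icc 1 ⌊x⌋₊, moebius d * ((2 * (⌊x⌋₊ / d ^ r) : ℕ) : ℤ) ^ k := by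
  rw [V_eq_card r k x hx]
  set N := ⌊x⌋₊
  set S := Fintype.piFinset (fun _ : Fin k => TT N) with hS
  rw [Finset.card_filter]
  push_cast
  have h1 : ∀ t ∈ S, (if ¬ ∃ p : ℕ, p.Prime ∧ ∀ i, (p : ℤ) ^ r ∣ t i then (1 : ℤ) else 0) =
      ∑ d ∈ Finset.Icc 1 N, if (∀ i, (d : ℤ) ^ r ∣ t i) then moebius d else 0 := by
    intro t ht
    rw [← Finset.sum_filter, mob_sum, ite_not]
    intro d hd
    have hi := hd ⟨0, by omega⟩
    rw [hS, Fintype.mem_piFinset] at ht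
    have h2 := ht ⟨0, by omega⟩
    rw [TT, Finset.mem_erase, Finset.mem_Icc] at h2
    rw [← Nat.cast_pow, Int.natCast_dvd] at hi
    have h3 := Nat.le_of_dvd (by omega) hi
    constructor
    · rcases Nat.eq_zero_or_pos d with h | h
      · subst h
        rw [zero_pow (by omega), zero_dvd_iff] at hi
        omega
      · exact h
    · have := Nat.le_self_pow (show r ≠ 0 by omega) d
      omega
  rw [Finset.sum_congr rfl h1, Finset.sum_comm]
  refine Finset.sum_congr rfl fun d hd => ?_
  rw [← Finset.sum_filter, Finset.sum_const, nsmul_eq_mul, mul_comm]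
  congr 1
  have : S.filter (fun t => ∀ i, (d : ℤ) ^ r ∣ t i) =
      Fintype.piFinset (fun _ : Fin k => (TT N).filter (fun z => ((d ^ r : ℕ) : ℤ) ∣ z)) := by
    ext t
    simp [hS, Fintype.mem_piFinset, forall_and]
  rw [this, Fintype.card_piFinset, Finset.prod_const, card_TT_dvd]
  · simp
  · exact Nat.one_le_pow _ _ (Finset.mem_Icc.1 hd).1

open ArithmeticFunction in
lemma V_hasSum (r k : ℕ) (hr : 1 ≤ r) (hk : 2 ≤ k) (x : ℝ) (hx : 0 ≤ x) :
    HasSum (fun d : ℕ => (moebius d : ℝ) * (2 * (⌊x / (d : ℝ) ^ r⌋₊ : ℝ)) ^ k) (V r k x : ℝ) := by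
  have h : (V r k x : ℝ) = ∑ d ∈ Finset.Icc 1 ⌊x⌋₊,
      (moebius d : ℝ) * (2 * (⌊x / (d : ℝ) ^ r⌋₊ : ℝ)) ^ k := by
    have h1 := congrArg (fun z : ℤ => (z : ℝ)) (V_formula r k hr hk x hx)
    simp only [Int.cast_natCast, Int.cast_sum, Int.cast_mul, Int.cast_pow] at h1
    rw [h1]
    refine Finset.sum_congr rfl fun d hd => ?_
    rw [← Nat.cast_pow d r, Nat.floor_div_natCast, Nat.cast_mul]
    norm_num
  rw [h]
  apply hasSum_sum_of_ne_finset_zero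
  intro d hd
  rcases Nat.eq_zero_or_pos d with h0 | h0
  · subst h0; simp
  have hd' : ⌊x⌋₊ < d := by
    rw [Finset.mem_Icc] at hd; omega
  rw [← Nat.cast_pow d r, Nat.floor_div_natCast, Nat.div_eq_of_lt]
  · simp; right; omega
  · exact lt_of_lt_of_le hd' (Nat.le_self_pow (by omega) d)

open ArithmeticFunction in
lemma zeta_inv (s : ℕ) (hs : 2 ≤ s) :
    0 < zetaR s ∧ HasSum (fun d : ℕ => (moebius d : ℝ) * (1 / (d : ℝ) ^ s)) (1 / zetaR s) := by
  have hsum : Summable (fun d : ℕ => (1 : ℝ) / (d : ℝ) ^ s) :=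
    Real.summable_one_div_nat_pow.2 (by omega)
  have hz : zetaR s = ∑' n : ℕ, (1 : ℝ) / (n : ℝ) ^ s := by
    rw [hsum.tsum_eq_zero_add, zetaR]
    simp [show s ≠ 0 by omega, Real.rpow_natCast]
  have hpos : 0 < zetaR s := by
    rw [hz]
    exact hsum.tsum_pos (fun i => by positivity) 1 (by simp)
  have hms : Summable (fun d : ℕ => (moebius d : ℝ) * (1 / (d : ℝ) ^ s)) := by
    refine Summable.of_norm_bounded hsum fun d => ?_
    rw [norm_mul, Real.norm_of_nonneg (show (0 : ℝ) ≤ 1 / (d : ℝ) ^ s by positivity)]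
    refine mul_le_of_le_one_left (by positivity) ?_
    rw [Real.norm_eq_abs]
    exact_mod_cast abs_moebius_le_one (n := d)
  refine ⟨hpos, ?_⟩
  have hre : 1 < ((s : ℂ)).re := by simp; omega
  have key := LSeries_zeta_mul_Lseries_moebius hre
  rw [LSeries_zeta_eq_riemannZeta hre, zeta_nat_eq_tsum_of_gt_one (by omega)] at key
  have e1 : (∑' n : ℕ, 1 / (n : ℂ) ^ s) = ((zetaR s : ℝ) : ℂ) := by
    rw [hz, Complex.ofReal_tsum]; push_cast; rfl
  have e2 : LSeries (fun n => ((moebius n : ℤ) : ℂ)) s =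
      ((∑' d : ℕ, (moebius d : ℝ) * (1 / (d : ℝ) ^ s) : ℝ) : ℂ) := by
    rw [Complex.ofReal_tsum, LSeries]
    congr 1
    ext n
    rw [LSeries.term_def]
    split_ifs with h
    · subst h; simp
    · push_cast; rw [Complex.cpow_natCast]; ring
  rw [e1, e2] at key
  have key' : zetaR s * (∑' d : ℕ, (moebius d : ℝ) * (1 / (d : ℝ) ^ s)) = 1 := by
    exact_mod_cast key
  rw [one_div, ← eq_inv_of_mul_eq_one_right key']
  exact hms.hasSum

open ArithmeticFunction in
lemma upper (r k : ℕ) (hr : 1 ≤ r) (hk : 2 ≤ k) (hrk : 3 ≤ r * k) :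
    ∃ C : ℝ, ∀ x : ℝ, 0 ≤ x →
      |(V r k x : ℝ) - (2 * x) ^ k / zetaR (r * k)| ≤ C * x ^ (k - 1) := by
  obtain ⟨-, hz⟩ := zeta_inv (r * k) (by omega)
  have hexp : 1 < r * (k - 1) := by
    obtain ⟨j, rfl⟩ : ∃ j, k = j + 2 := ⟨k - 2, by omega⟩
    rw [show j + 2 - 1 = j + 1 by omega]
    by_contra h
    have : r = 1 := by nlinarith
    subst this
    omega
  have hsum : Summable (fun d : ℕ => (1 : ℝ) / (d : ℝ) ^ (r * (k - 1))) :=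
    Real.summable_one_div_nat_pow.2 hexp
  refine ⟨2 ^ k * k * ∑' d : ℕ, (1 : ℝ) / (d : ℝ) ^ (r * (k - 1)), fun x hx => ?_⟩
  have h1 := (V_hasSum r k hr hk x hx).sub (hz.mul_left ((2 * x) ^ k))
  rw [mul_one_div] at h1
  push_cast at h1
  have h2 := hsum.hasSum.mul_left (2 ^ k * k * x ^ (k - 1))
  rw [mul_right_comm, ← h1.tsum_eq, ← Real.norm_eq_abs]
  refine tsum_of_norm_bounded h2 fun d => ?_
  have ha : 0 ≤ x / (d : ℝ) ^ r := by positivity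
  set a := x / (d : ℝ) ^ r with had
  have e : (moebius d : ℝ) * (2 * (⌊a⌋₊ : ℝ)) ^ k -
      (2 * x) ^ k * ((moebius d : ℝ) * (1 / (d : ℝ) ^ (r * k))) =
      (moebius d : ℝ) * (2 ^ k * ((⌊a⌋₊ : ℝ) ^ k - a ^ k)) := by
    rw [had, div_pow, ← pow_mul, mul_pow, mul_pow]; ring
  rw [e, Real.norm_eq_abs, abs_mul, abs_mul, abs_of_nonneg (show (0 : ℝ) ≤ 2 ^ k by positivity)]
  have hm : |(moebius d : ℝ)| ≤ 1 := by exact_mod_cast abs_moebius_le_one (n := d)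
  have hfl := Nat.floor_le ha
  have hfl2 := Nat.lt_floor_add_one a
  have hb : |(⌊a⌋₊ : ℝ) ^ k - a ^ k| ≤ k * a ^ (k - 1) := by
    refine (abs_pow_sub_pow_le _ _ _).trans ?_
    rw [abs_of_nonneg ha, abs_of_nonneg (show (0 : ℝ) ≤ (⌊a⌋₊ : ℝ) from Nat.cast_nonneg _), max_eq_right hfl]
    have : |(⌊a⌋₊ : ℝ) - a| ≤ 1 := by rw [abs_le]; constructor <;> linarith
    rw [mul_assoc]
    exact mul_le_of_le_one_left (by positivity) this
  have e2 : 2 ^ k * (k : ℝ) * x ^ (k - 1) * (1 / (d : ℝ) ^ (r * (k - 1))) =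
      2 ^ k * (k * a ^ (k - 1)) := by
    rw [had, div_pow, ← pow_mul]; ring
  rw [e2]
  refine (mul_le_of_le_one_left (by positivity) hm).trans ?_
  exact mul_le_mul_of_nonneg_left hb (by positivity)

lemma V_half (r k n : ℕ) : V r k ((n : ℝ) + 1 / 2) = V r k n := by
  classical
  rw [V_eq_card _ _ _ (by positivity), V_eq_card _ _ _ (by positivity)]
  have : ⌊(n : ℝ) + 1 / 2⌋₊ = ⌊(n : ℝ)⌋₊ := by
    rw [Nat.floor_natCast, Nat.floor_eq_iff (by positivity)]
    constructor <;> linarith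
  rw [this]

theorem error_term_omega (r k : ℕ) (hr : 1 ≤ r) (hk : 2 ≤ k) (hrk : 3 ≤ r * k) :
    0 < limsup (fun x : ℝ =>
        |(V r k x : ℝ) - (2 * x) ^ k / zetaR (r * k)| / x ^ (k - 1)) atTop := by
  obtain ⟨hzpos, -⟩ := zeta_inv (r * k) (by omega)
  push_cast at hzpos
  obtain ⟨C, hC⟩ := upper r k hr hk hrk
  set Z := zetaR (r * k) with hZ
  have hc : 0 < 1 / (2 * Z) := by positivity
  refine lt_of_lt_of_le hc (le_limsup_of_frequently_le ?_ ?_)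
  · rw [frequently_atTop]
    intro a
    obtain ⟨n, hn⟩ := exists_nat_ge (max a 1)
    have hna : a ≤ n := (le_max_left _ _).trans hn
    have hn1 : (1 : ℝ) ≤ n := (le_max_right _ _).trans hn
    by_contra hcon
    push Not at hcon
    have h1 := hcon n hna
    have h2 := hcon (n + 1 / 2) (by linarith)
    rw [div_lt_iff₀ (by positivity)] at h1 h2
    rw [V_half] at h2
    obtain ⟨j, rfl⟩ : ∃ j, k = j + 1 := ⟨k - 1, by omega⟩
    simp only [Nat.add_sub_cancel] at h1 h2
    set v : ℝ := (V r (j + 1) n : ℝ)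
    set y : ℝ := (n : ℝ)
    have hp : (y + 1 / 2) ^ j ≤ 2 ^ j * y ^ j := by
      rw [← mul_pow]
      exact pow_le_pow_left₀ (by positivity) (by linarith) j
    have hq : y ^ j ≤ (y + 1 / 2) ^ j := pow_le_pow_left₀ (by positivity) (by linarith) j
    have hyj : 0 < y ^ j := by positivity
    have h2j : (1 : ℝ) ≤ 2 ^ j := one_le_pow₀ (by norm_num)
    have hb : (2 * y) ^ (j + 1) + 2 ^ j * y ^ j ≤ (2 * (y + 1 / 2)) ^ (j + 1) := by
      rw [mul_pow, mul_pow, pow_succ, pow_succ, pow_succ]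
      have : y ^ j * (y + 1 / 2) ≤ (y + 1 / 2) ^ j * (y + 1 / 2) :=
        mul_le_mul_of_nonneg_right hq (by positivity)
      have := mul_le_mul_of_nonneg_left this (show (0 : ℝ) ≤ 2 ^ j by positivity)
      linarith
    have hb' : 2 ^ j * y ^ j / Z ≤ (2 * (y + 1 / 2)) ^ (j + 1) / Z - (2 * y) ^ (j + 1) / Z := by
      rw [← sub_div]
      exact div_le_div_of_nonneg_right (by linarith) hzpos.le
    have h3 := (abs_lt.1 h1).2
    have h4 := (abs_lt.1 h2).1
    have h5 : 1 / (2 * Z) * (y + 1 / 2) ^ j ≤ 1 / (2 * Z) * (2 ^ j * y ^ j) :=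
      mul_le_mul_of_nonneg_left hp hc.le
    have h6 : 1 / (2 * Z) * y ^ j ≤ 1 / (2 * Z) * (2 ^ j * y ^ j) :=
      mul_le_mul_of_nonneg_left (by nlinarith) hc.le
    have h7 : 2 ^ j * y ^ j / Z = 2 * (1 / (2 * Z) * (2 ^ j * y ^ j)) := by
      field_simp
    linarith
  · refine isBoundedUnder_of_eventually_le (a := C) ?_
    filter_upwards [eventually_gt_atTop 0] with x hx
    rw [div_le_iff₀ (by positivity)]
    exact hC x hx.le
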